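/- arXiv:1302.0271 — 2 statements merged into one kernel-verified Lean document; each statement's English description precedes it below -/
import Mathlib

section
/- Let k ≥ 1 be an integer, α = (1+√(1+4/k))/2, β = kα+1, a_n = ⌊nα⌋, b_n = ⌊nβ⌋. For all integers m > n ≥ 0 there do not exist integers s,t ≥ 1 with |s−t| < k such that (a_m − s, b_m − t) = (a_n, b_n) or (a_m − s, b_m − t) = (b_n, a_n). (No move of Type II, i.e., no k-Wythoff Nim move, connects two positions of the form (a_m,b_m).) -/
/-- α = (1 + √(1 + 4/k)) / 2 -/
noncomputable def alphaK (k : ℕ) : ℝ := (1 + Real.sqrt (1 + 4 / (k : ℝ))) / 2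

/-- β = k·α + 1 -/
noncomputable def betaK (k : ℕ) : ℝ := (k : ℝ) * alphaK k + 1

/-- a_n = ⌊n·α⌋ -/
noncomputable def aSeq (k n : ℕ) : ℤ := ⌊(n : ℝ) * alphaK k⌋

/-- b_n = ⌊n·β⌋ -/
noncomputable def bSeq (k n : ℕ) : ℤ := ⌊(n : ℝ) * betaK k⌋

theorem alphaK_gt_one (k : ℕ) (hk : 1 ≤ k) : 1 < alphaK k := by
  have hk' : (0:ℝ) < k := by exact_mod_cast hk
  have h : (1:ℝ) < Real.sqrt (1 + 4 / (k : ℝ)) := by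
    apply Real.lt_sqrt_of_sq_lt
    have : 0 < 4 / (k:ℝ) := by positivity
    linarith
  unfold alphaK
  linarith

theorem bSeq_eq (k n : ℕ) : bSeq k n = n + ⌊(k : ℝ) * (n * alphaK k)⌋ := by
  unfold bSeq betaK
  rw [show (n:ℝ) * ((k:ℝ) * alphaK k + 1) = (k : ℝ) * (n * alphaK k) + (n : ℕ) by ring,
    Int.floor_add_natCast]
  ring

theorem le_aSeq (k : ℕ) (hk : 1 ≤ k) (n : ℕ) : (n : ℤ) ≤ aSeq k n := by
  unfold aSeq
  rw [Int.le_floor]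
  have := alphaK_gt_one k hk
  have hn : (0:ℝ) ≤ n := Nat.cast_nonneg n
  push_cast
  nlinarith

theorem bSeq_lower (k n : ℕ) : n + k * aSeq k n ≤ bSeq k n := by
  rw [bSeq_eq]
  have : (k:ℤ) * aSeq k n ≤ ⌊(k : ℝ) * (n * alphaK k)⌋ := by
    rw [Int.le_floor]
    push_cast
    exact mul_le_mul_of_nonneg_left (Int.floor_le _) (Nat.cast_nonneg k)
  linarith

theorem bSeq_upper (k : ℕ) (hk : 1 ≤ k) (n : ℕ) :
    bSeq k n ≤ n + k * aSeq k n + k - 1 := by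
  rw [bSeq_eq]
  have hk' : (0:ℝ) < k := by exact_mod_cast hk
  have : ⌊(k : ℝ) * (n * alphaK k)⌋ < (k:ℤ) * aSeq k n + k := by
    rw [Int.floor_lt]
    push_cast
    have h : (n:ℝ) * alphaK k < aSeq k n + 1 := Int.lt_floor_add_one _
    nlinarith
  linarith

/-- No move of Type II (k-Wythoff Nim move) connects two positions
    of the form (a_m, b_m). -/
theorem no_typeII_move_P_to_P (k : ℕ) (hk : 1 ≤ k) (m n : ℕ) (hmn : n < m) :
    ¬ ∃ s t : ℤ, 1 ≤ s ∧ 1 ≤ t ∧ |s - t| < (k : ℤ) ∧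
      ((aSeq k m - s = aSeq k n ∧ bSeq k m - t = bSeq k n) ∨
       (aSeq k m - s = bSeq k n ∧ bSeq k m - t = aSeq k n)) := by
  rintro ⟨s, t, hs, ht, hst, h⟩
  have hlt : t - s < k := by
    have := (abs_lt.mp hst).1
    linarith
  have hkz : (1:ℤ) ≤ k := by exact_mod_cast hk
  have hmn' : (n:ℤ) + 1 ≤ m := by exact_mod_cast hmn
  have hn0 : (0:ℤ) ≤ n := Int.natCast_nonneg n
  have hm := bSeq_lower k m
  have hn := bSeq_lower k n
  have hu := bSeq_upper k hk n
  have lm := le_aSeq k hk m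
  have ln := le_aSeq k hk n
  rcases h with ⟨h1, h2⟩ | ⟨h1, h2⟩
  · have e : aSeq k m = aSeq k n + s := by linarith
    rcases eq_or_lt_of_le hs with hs1 | hs2
    · have key : ⌊(k : ℝ) * (n * alphaK k)⌋ + k ≤ ⌊(k : ℝ) * (m * alphaK k)⌋ := by
        rw [← Int.floor_add_natCast]
        apply Int.floor_le_floor
        have h1 := alphaK_gt_one k hk
        have h2 : (n:ℝ) + 1 ≤ m := by exact_mod_cast hmn
        have h3 : (n:ℝ) * alphaK k + 1 ≤ m * alphaK k := by nlinarith
        have := mul_le_mul_of_nonneg_left h3 (Nat.cast_nonneg (α := ℝ) k)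
        linarith
      rw [bSeq_eq, bSeq_eq] at h2
      linarith
    · rw [e] at hm
      nlinarith
  · nlinarith
end

section
/- Let k ≥ 1 be an integer, α = (1+√(1+4/k))/2, β = kα+1, a_n = ⌊nα⌋, b_n = ⌊nβ⌋, c_n = a_n − a_{n−1}, d_n = b_n − b_{n−1}. Suppose p ≥ 1 and q > p satisfy c_p = c_q = 2 and c_j = 1 for all p < j < q (so q is the minimal index above p with c-value 2). Then the number of indices j with p < j < q and d_j = k+2 is exactly k−1. -/
/-- c_n = a_n − a_{n−1} (used for n ≥ 1) -/
noncomputable def cSeq (k n : ℕ) : ℤ := aSeq k n - aSeq k (n - 1)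

/-- d_n = b_n − b_{n−1} (used for n ≥ 1) -/
noncomputable def dSeq (k n : ℕ) : ℤ := bSeq k n - bSeq k (n - 1)

lemma alpha_facts (k : ℕ) (hk : 1 ≤ k) :
    1 < alphaK k ∧ (k : ℝ) * (alphaK k - 1) < 1 := by
  have hk' : (1 : ℝ) ≤ k := by exact_mod_cast hk
  have hpos : (0 : ℝ) < 4 / (k : ℝ) := by positivity
  have h1 : 1 < alphaK k := by
    unfold alphaK
    have : 1 < Real.sqrt (1 + 4 / (k : ℝ)) := by
      rw [Real.lt_sqrt (by norm_num)]; linarith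
    linarith
  have h2 : (k : ℝ) * (alphaK k * (alphaK k - 1)) = 1 := by
    unfold alphaK
    have hs := Real.sq_sqrt (show (0 : ℝ) ≤ 1 + 4 / (k : ℝ) by positivity)
    set s := Real.sqrt (1 + 4 / (k : ℝ))
    have : (1 + s) / 2 * ((1 + s) / 2 - 1) = 1 / (k : ℝ) := by
      have : (1 + s) / 2 * ((1 + s) / 2 - 1) = (s ^ 2 - 1) / 4 := by ring
      rw [this, hs]; ring
    rw [this]; field_simp
  refine ⟨h1, ?_⟩
  have : 0 < (k : ℝ) * (alphaK k - 1) := by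
    apply mul_pos <;> linarith
  nlinarith

lemma step_vals (x : ℝ) (m : ℤ) (h1 : (m : ℝ) < x) (h2 : x < m + 1) (n : ℕ) :
    ⌊((n + 1 : ℕ) : ℝ) * x⌋ - ⌊(n : ℝ) * x⌋ = m ∨
    ⌊((n + 1 : ℕ) : ℝ) * x⌋ - ⌊(n : ℝ) * x⌋ = m + 1 := by
  have a1 := Int.floor_le (((n + 1 : ℕ) : ℝ) * x)
  have a2 := Int.lt_floor_add_one (((n + 1 : ℕ) : ℝ) * x)
  have a3 := Int.floor_le ((n : ℝ) * x)
  have a4 := Int.lt_floor_add_one ((n : ℝ) * x)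
  set A := ⌊((n + 1 : ℕ) : ℝ) * x⌋
  set B := ⌊(n : ℝ) * x⌋
  push_cast at a1 a2
  have e1 : (A : ℝ) < ((B + m + 2 : ℤ) : ℝ) := by push_cast; linarith
  have e2 : ((B + m - 1 : ℤ) : ℝ) < (A : ℝ) := by push_cast; linarith
  have e1 := Int.cast_lt.mp e1
  have e2 := Int.cast_lt.mp e2
  omega

lemma count_aux (k : ℕ) (hk : 1 ≤ k) (p i : ℕ) :
    (((Finset.Ioc p (p + i)).filter (fun j => dSeq k j = (k : ℤ) + 2)).card : ℤ)
      = bSeq k (p + i) - bSeq k p - i * (k + 1) := by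
  obtain ⟨h1, h2⟩ := alpha_facts k hk
  have hk' : (1 : ℝ) ≤ k := by exact_mod_cast hk
  induction i with
  | zero => simp
  | succ i ih =>
    have hI : Finset.Ioc p (p + (i + 1)) = insert (p + i + 1) (Finset.Ioc p (p + i)) := by
      ext j; simp only [Finset.mem_Ioc, Finset.mem_insert]; omega
    have hs := step_vals (betaK k) (k + 1) (by unfold betaK; push_cast; nlinarith)
      (by unfold betaK; push_cast; nlinarith) (p + i)
    change bSeq k (p + i + 1) - bSeq k (p + i) = _ ∨ bSeq k (p + i + 1) - bSeq k (p + i) = _ at hs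
    have hd : dSeq k (p + i + 1) = bSeq k (p + i + 1) - bSeq k (p + i) := rfl
    rw [hI, Finset.filter_insert, ← add_assoc]
    split_ifs with h
    · rw [Finset.card_insert_of_notMem (by simp)]
      push_cast
      rw [ih]; linarith
    · rw [ih]
      push_cast
      rcases hs with hs | hs
      · linarith
      · exact absurd (by rw [hd, hs]; ring) h

theorem count_between_twos (k : ℕ) (hk : 1 ≤ k) (p q : ℕ) (hp : 1 ≤ p)
    (hpq : p < q) (hcp : cSeq k p = 2) (hcq : cSeq k q = 2)
    (hmin : ∀ j : ℕ, p < j → j < q → cSeq k j ≠ 2) :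
    ((Finset.Ioo p q).filter (fun j => dSeq k j = (k : ℤ) + 2)).card = k - 1 := by
  obtain ⟨h1, h2⟩ := alpha_facts k hk
  have hk' : (1 : ℝ) ≤ k := by exact_mod_cast hk
  have h3 : alphaK k < 2 := by nlinarith
  obtain ⟨i, rfl⟩ : ∃ i, q = p + i + 1 := ⟨q - p - 1, by omega⟩
  obtain ⟨r, rfl⟩ : ∃ r, p = r + 1 := ⟨p - 1, by omega⟩
  have hI : Finset.Ioo (r + 1) (r + 1 + i + 1) = Finset.Ioc (r + 1) (r + 1 + i) := by
    ext j; simp only [Finset.mem_Ioc, Finset.mem_Ioo]; omega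
  have hconst : ∀ l, l ≤ i → aSeq k (r + 1 + l) = aSeq k (r + 1) + l := by
    intro l
    induction l with
    | zero => simp
    | succ l ih =>
      intro hl
      have ih := ih (by omega)
      have hm := hmin (r + 1 + l + 1) (by omega) (by omega)
      have hs := step_vals (alphaK k) 1 (by push_cast; linarith) (by push_cast; linarith)
        (r + 1 + l)
      change cSeq k (r + 1 + l + 1) = _ ∨ cSeq k (r + 1 + l + 1) = _ at hs
      have hd : cSeq k (r + 1 + l + 1) = aSeq k (r + 1 + l + 1) - aSeq k (r + 1 + l) := rfl
      rw [← add_assoc]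
      push_cast
      rcases hs with hs | hs
      · linarith
      · exact absurd hs hm
  have hc := hconst i le_rfl
  have hcp' : aSeq k (r + 1) - aSeq k r = 2 := hcp
  have hcq' : aSeq k (r + 1 + i + 1) - aSeq k (r + 1 + i) = 2 := hcq
  have fl : ∀ n : ℕ, (aSeq k n : ℝ) ≤ n * alphaK k := fun n => Int.floor_le _
  have fu : ∀ n : ℕ, (n : ℝ) * alphaK k < aSeq k n + 1 := fun n => Int.lt_floor_add_one _
  have hcpR : (aSeq k (r + 1) : ℝ) - aSeq k r = 2 := by exact_mod_cast hcp'
  have hcqR : (aSeq k (r + 1 + i + 1) : ℝ) - aSeq k (r + 1 + i) = 2 := by exact_mod_cast hcq'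
  have hb1 : bSeq k (r + 1) = k * aSeq k (r + 1) + (r + 1) := by
    unfold bSeq betaK
    rw [Int.floor_eq_iff]
    have u1 := fl (r + 1)
    have u2 := fu r
    push_cast at u1 u2 ⊢
    constructor <;> nlinarith
  have hb2 : bSeq k (r + 1 + i) = k * aSeq k (r + 1 + i) + (k - 1) + (r + 1 + i) := by
    unfold bSeq betaK
    rw [Int.floor_eq_iff]
    have u1 := fl (r + 1 + i + 1)
    have u2 := fu (r + 1 + i)
    push_cast at u1 u2 ⊢
    constructor <;> nlinarith
  have := count_aux k hk (r + 1) i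
  rw [hI]
  rw [hb1, hb2, hc] at this
  have e : (((Finset.Ioc (r + 1) (r + 1 + i)).filter
      (fun j => dSeq k j = (k : ℤ) + 2)).card : ℤ) = k - 1 := by
    rw [this]; ring
  omega
end
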